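/- Let 2 ≤ a < b be integers, g = lcm(a,b), ā = g/a, b̄ = g/b, and let k ≥ ā, l ≥ 1, m ≥ 0 be integers. Let S = {x ∈ {-1,0,1}^{k+l+m} : a·Σ_{i=1}^{k} x_i + b·Σ_{i=k+1}^{k+l} x_i + g·Σ_{i=k+l+1}^{k+l+m} x_i = 0} (the cut associated to the partition (g^m,a^k,b^l)), let π ∈ P(k+l+m) be the partition whose only non-singleton block is {1,…,ā}, let T = {z ∈ {-1,0,1}^{k} : Σ_{i=1}^{k} z_i = 0}, and let ν ∈ P(k) be the partition whose only non-singleton block is {1,…,ā}. Then: (i) π↓S = {ρ ∈ P(k+l+m) : ρ|_{{1,…,k}} ∈ ν↓T}; (ii) S ∖ (π↓S) = {x ∈ {-1,0,1}^{k+l+m} : Σ_{i=1}^{k} x_i = 0, |Plus(x_1,…,x_k)| < ā, and b·Σ_{i=k+1}^{k+l} x_i + g·Σ_{i=k+l+1}^{k+l+m} x_i = 0}; and (iii) T ∖ (ν↓T) = {z ∈ T : |Plus(z)| < ā}, so that S ∖ (π↓S) = {x : (x_1,…,x_k) ∈ T∖(ν↓T) and (x_{k+1},…,x_{k+l+m})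 ∈ U}, where U = {y ∈ {-1,0,1}^{l+m} : Σ_{i=1}^{l} y_i + b̄·Σ_{i=l+1}^{l+m} y_i = 0} is the cut associated to (b̄^m,1^l). -/

import Mathlib

/-- A vector in ℝ^n with all coordinates in {-1,0,1}. -/
def IsCube {n : ℕ} (x : Fin n → ℝ) : Prop := ∀ i, x i = -1 ∨ x i = 0 ∨ x i = 1

def PlusSet {n : ℕ} (x : Fin n → ℝ) : Set (Fin n) := {i | x i = 1}

def MinusSet {n : ℕ} (x : Fin n → ℝ) : Set (Fin n) := {i | x i = -1}

/-- An `n`-cut: a span-closed subset of {-1,0,1}^n all of whose nonzero elements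
have nonempty Plus and Minus sets. -/
def IsCut {n : ℕ} (S : Set (Fin n → ℝ)) : Prop :=
  (∀ x ∈ S, IsCube x) ∧
  ((Submodule.span ℝ S : Set (Fin n → ℝ)) ∩ {x | IsCube x}) = S ∧
  ∀ x ∈ S, x ≠ 0 → (PlusSet x).Nonempty ∧ (MinusSet x).Nonempty
/-- The multiset of coordinates where `x` equals 1 (each appearing once). -/
noncomputable def plusM {n : ℕ} (x : Fin n → ℝ) : Multiset (Fin n) :=
  (Finset.univ.filter (fun i => x i = 1)).val

/-- The multiset of coordinates where `x` equals -1 (each appearing once). -/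
noncomputable def minusM {n : ℕ} (x : Fin n → ℝ) : Multiset (Fin n) :=
  (Finset.univ.filter (fun i => x i = -1)).val

/-- One step of the closure operation `⇓S` on collections of multisubsets of `[n]`:
(2) merge two blocks; (3) replace, inside one block, one copy of each element of
`Plus(x)` by one copy of each element of `Minus(x)`, for some `x ∈ S`. -/
inductive DownStep {n : ℕ} (S : Set (Fin n → ℝ)) :
    Multiset (Multiset (Fin n)) → Multiset (Multiset (Fin n)) → Prop
  | merge (B₁ B₂ : Multiset (Fin n)) (rest : Multiset (Multiset (Fin n))) :
      DownStep S (B₁ ::ₘ B₂ ::ₘ rest) ((B₁ + B₂) ::ₘ rest)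
  | swap (B₁ : Multiset (Fin n)) (rest : Multiset (Multiset (Fin n))) (x : Fin n → ℝ)
      (hx : x ∈ S) (hsub : plusM x ≤ B₁) :
      DownStep S (B₁ ::ₘ rest) ((B₁ - plusM x + minusM x) ::ₘ rest)

/-- A multiset of multisets of `[n]` which is an honest partition of `[n]`:
all blocks nonempty, globally no repetitions, and every element covered. -/
def IsPartitionM {n : ℕ} (A : Multiset (Multiset (Fin n))) : Prop :=
  (∀ B ∈ A, B ≠ 0) ∧ A.sum.Nodup ∧ ∀ i : Fin n, i ∈ A.sum

/-- `π ↓ S`: the set of honest partitions of `[n]` reachable from `π` by `⇓S`-steps. -/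
def downClos {n : ℕ} (S : Set (Fin n → ℝ)) (π : Multiset (Multiset (Fin n))) :
    Set (Multiset (Multiset (Fin n))) :=
  {ρ | IsPartitionM ρ ∧ Relation.ReflTransGen (DownStep S) π ρ}

/-- The partition of `[n]` whose only non-singleton blocks are `Plus(s)` and `Minus(s)`. -/
noncomputable def partOf {n : ℕ} (s : Fin n → ℝ) : Multiset (Multiset (Fin n)) :=
  plusM s ::ₘ minusM s ::ₘ
    ((Finset.univ.filter (fun i => s i = 0)).val.map (fun i => ({i} : Multiset (Fin n))))

/-- `S ∖ Π`: remove from `S` every element `s` whose associated partition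
(non-singleton blocks `Plus(s)`, `Minus(s)`) lies in `Π`. -/
noncomputable def cutMinus {n : ℕ} (S : Set (Fin n → ℝ))
    (P : Set (Multiset (Multiset (Fin n)))) : Set (Fin n → ℝ) :=
  {s | s ∈ S ∧ partOf s ∉ P}

/-- The partition of `[n]` whose only (potentially) non-singleton block is `A`. -/
def onlyBlock {n : ℕ} (A : Finset (Fin n)) : Multiset (Multiset (Fin n)) :=
  A.val ::ₘ ((Finset.univ \ A).val.map (fun i => ({i} : Multiset (Fin n))))

/-- Restriction of a partition of `[n]` to the first `l` coordinates `{0,…,l-1}`. -/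
def restrictFirst {n : ℕ} (l : ℕ) (ρ : Multiset (Multiset (Fin n))) :
    Multiset (Multiset (Fin l)) :=
  (ρ.map (fun B => B.filterMap
    (fun i => if h : (i : ℕ) < l then some (⟨(i : ℕ), h⟩ : Fin l) else none))).filter
    (fun B => B ≠ 0)

/-- The cut associated to the partition `(g^m, a^k, b^l)`: first `k` coordinates
have weight `a`, the next `l` have weight `b`, the last `m` have weight `g`. -/
noncomputable def SGAB (a b g k l m : ℕ) : Set (Fin (k + l + m) → ℝ) :=
  {x | IsCube x ∧ ∑ i : Fin (k + l + m),
    (if (i : ℕ) < k then (a : ℝ) else if (i : ℕ) < k + l then (b : ℝ) else (g : ℝ)) * x i = 0}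

/-- The cut associated to the partition `(1^k)`. -/
noncomputable def TOnes (k : ℕ) : Set (Fin k → ℝ) :=
  {z | IsCube z ∧ ∑ i, z i = 0}

/-- The cut associated to the partition `(b̄^m, 1^l)`: first `l` coordinates have
weight 1, last `m` coordinates have weight `b̄`. -/
noncomputable def UBbar (bbar l m : ℕ) : Set (Fin (l + m) → ℝ) :=
  {y | IsCube y ∧ ∑ i : Fin (l + m), (if (i : ℕ) < l then 1 else (bbar : ℝ)) * y i = 0}

/-- The partition of `[n]` whose only non-singleton block is `{0,…,a-1}`. -/
def firstBlock (a n : ℕ) : Multiset (Multiset (Fin n)) :=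
  onlyBlock (Finset.univ.filter (fun i : Fin n => (i : ℕ) < a))

section Reachability

open Relation

variable {n : ℕ} {S : Set (Fin n → ℝ)} {p : Fin n → Prop}

theorem plusM_single_sub_single {i j : Fin n} (hij : i ≠ j) :
    plusM (Pi.single i 1 - Pi.single j 1 : Fin n → ℝ) = {i} := by
  have : (Finset.univ.filter
      (fun t => (Pi.single i 1 - Pi.single j 1 : Fin n → ℝ) t = 1)) = {i} := by
    ext t
    simp only [Finset.mem_filter, Finset.mem_univ, true_and, Finset.mem_singleton,
      Pi.sub_apply, Pi.single_apply]
    split_ifs <;> simp_all; norm_num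
  rw [plusM, this, Finset.singleton_val]

theorem minusM_single_sub_single {i j : Fin n} (hij : i ≠ j) :
    minusM (Pi.single i 1 - Pi.single j 1 : Fin n → ℝ) = {j} := by
  have : (Finset.univ.filter
      (fun t => (Pi.single i 1 - Pi.single j 1 : Fin n → ℝ) t = -1)) = {j} := by
    ext t
    simp only [Finset.mem_filter, Finset.mem_univ, true_and, Finset.mem_singleton,
      Pi.sub_apply, Pi.single_apply]
    split_ifs <;> simp_all; norm_num
  rw [minusM, this, Finset.singleton_val]

/-- Indices that may be exchanged one for the other: equal ones, and any two satisfying `p`. -/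
def Exchangeable (p : Fin n → Prop) (i j : Fin n) : Prop := i = j ∨ p i ∧ p j

theorem reach_exchange
    (hS : ∀ i j, p i → p j → i ≠ j → (Pi.single i 1 - Pi.single j 1 : Fin n → ℝ) ∈ S)
    {i j : Fin n} (hij : Exchangeable p i j) (D : Multiset (Fin n))
    (R : Multiset (Multiset (Fin n))) :
    ReflTransGen (DownStep S) ((i ::ₘ D) ::ₘ R) ((j ::ₘ D) ::ₘ R) := by
  by_cases h : i = j
  · rw [h]
  · obtain ⟨hi, hj⟩ := hij.resolve_left h
    have key := DownStep.swap (S := S) (i ::ₘ D) R _ (hS i j hi hj h)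
      (by rw [plusM_single_sub_single h]; simp)
    rw [plusM_single_sub_single h, minusM_single_sub_single h] at key
    have e : (i ::ₘ D) - {i} + {j} = j ::ₘ D := by
      rw [Multiset.sub_singleton, Multiset.erase_cons_head, add_comm, Multiset.singleton_add]
    rw [e] at key
    exact ReflTransGen.single key

theorem reach_block_of_rel
    (hS : ∀ i j, p i → p j → i ≠ j → (Pi.single i 1 - Pi.single j 1 : Fin n → ℝ) ∈ S)
    {M N : Multiset (Fin n)} (h : Multiset.Rel (Exchangeable p) M N)
    (C : Multiset (Fin n)) (R : Multiset (Multiset (Fin n))) :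
    ReflTransGen (DownStep S) ((C + M) ::ₘ R) ((C + N) ::ₘ R) := by
  induction h generalizing C with
  | zero => exact .refl
  | @cons a b as bs hab _ ih =>
    have h1 := ih (a ::ₘ C)
    have h2 := reach_exchange hS hab (C + bs) R
    simp only [Multiset.cons_add, Multiset.add_cons] at h1 h2 ⊢
    exact h1.trans h2

theorem reach_singletons_of_rel
    (hS : ∀ i j, p i → p j → i ≠ j → (Pi.single i 1 - Pi.single j 1 : Fin n → ℝ) ∈ S)
    {M N : Multiset (Fin n)} (h : Multiset.Rel (Exchangeable p) M N)
    (R : Multiset (Multiset (Fin n))) :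
    ReflTransGen (DownStep S) (M.map (fun i => {i}) + R) (N.map (fun i => {i}) + R) := by
  induction h generalizing R with
  | zero => exact .refl
  | @cons a b as bs hab _ ih =>
    have h1 := ih ({a} ::ₘ R)
    have h2 := reach_exchange hS hab 0 (bs.map (fun i => {i}) + R)
    simp only [Multiset.map_cons, Multiset.cons_add, Multiset.add_cons,
      Multiset.cons_zero] at h1 h2 ⊢
    exact h1.trans h2

theorem reach_absorb_singletons (B C : Multiset (Fin n)) (R : Multiset (Multiset (Fin n))) :
    ReflTransGen (DownStep S) (B ::ₘ (C.map (fun i => {i}) + R)) ((B + C) ::ₘ R) := by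
  induction C using Multiset.induction_on generalizing B with
  | empty => simpa using ReflTransGen.refl
  | cons a C ih =>
    have h1 := DownStep.merge (S := S) B {a} (C.map (fun i => {i}) + R)
    have h2 := ih (B + {a})
    have e : B + {a} + C = B + a ::ₘ C := by
      rw [add_assoc, Multiset.singleton_add]
    rw [e] at h2
    rw [Multiset.map_cons, Multiset.cons_add]
    exact ReflTransGen.head h1 h2

theorem reach_of_singletons (P R : Multiset (Multiset (Fin n))) (hP : ∀ B ∈ P, B ≠ 0) :
    ReflTransGen (DownStep S) (P.sum.map (fun i => {i}) + R) (P + R) := by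
  induction P using Multiset.induction_on generalizing R with
  | empty => simpa using ReflTransGen.refl
  | cons B P ih =>
    obtain ⟨d, hd⟩ := Multiset.exists_mem_of_ne_zero (hP B (Multiset.mem_cons_self _ _))
    obtain ⟨D, rfl⟩ := Multiset.exists_cons_of_mem hd
    have h1 := reach_absorb_singletons (S := S) {d} D (P.sum.map (fun i => {i}) + R)
    have h2 := ih ((d ::ₘ D) ::ₘ R) fun B hB => hP B (Multiset.mem_cons_of_mem hB)
    rw [Multiset.singleton_add] at h1
    rw [Multiset.sum_cons, Multiset.map_add, Multiset.map_cons, Multiset.cons_add,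
      Multiset.cons_add, Multiset.cons_add, add_assoc]
    rw [Multiset.add_cons, Multiset.add_cons] at h2
    exact h1.trans h2

theorem IsPartitionM.sum_eq {ρ : Multiset (Multiset (Fin n))} (h : IsPartitionM ρ) :
    ρ.sum = Finset.univ.val :=
  (Multiset.Nodup.ext h.2.1 Finset.univ.nodup).2 fun i => by simp [h.2.2 i]

/-- Reduced modulo `d`, the numbers of elements satisfying `p` in the blocks have a sum that
no step increases. -/
theorem sum_countP_mod_le_of_downStep [DecidablePred p] (d : ℕ)
    (hS : ∀ x ∈ S, (plusM x).countP p ≡ (minusM x).countP p [MOD d])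
    {P Q : Multiset (Multiset (Fin n))} (h : DownStep S P Q) :
    (Q.map (fun B => B.countP p % d)).sum ≤ (P.map (fun B => B.countP p % d)).sum := by
  cases h with
  | merge B₁ B₂ R =>
    simp only [Multiset.map_cons, Multiset.sum_cons, Multiset.countP_add]
    have : (B₁.countP p + B₂.countP p) % d ≤ B₁.countP p % d + B₂.countP p % d := by
      rw [Nat.add_mod]
      exact Nat.mod_le _ _
    omega
  | swap B R x hx hsub =>
    simp only [Multiset.map_cons, Multiset.sum_cons, Multiset.countP_add,
      Multiset.countP_sub hsub]
    have hle := Multiset.countP_le_of_le p hsub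
    have : (B.countP p - (plusM x).countP p + (minusM x).countP p) ≡ B.countP p [MOD d] := by
      calc _ ≡ B.countP p - (plusM x).countP p + (plusM x).countP p [MOD d] :=
            Nat.ModEq.add_left _ (hS x hx).symm
        _ = B.countP p := by omega
    rw [Nat.ModEq] at this
    omega

theorem sum_countP_mod_le_of_reach [DecidablePred p] (d : ℕ)
    (hS : ∀ x ∈ S, (plusM x).countP p ≡ (minusM x).countP p [MOD d])
    {P Q : Multiset (Multiset (Fin n))} (h : ReflTransGen (DownStep S) P Q) :
    (Q.map (fun B => B.countP p % d)).sum ≤ (P.map (fun B => B.countP p % d)).sum := by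
  induction h with
  | refl => exact le_rfl
  | tail _ h ih => exact (sum_countP_mod_le_of_downStep d hS h).trans ih

theorem sum_map_countP [DecidablePred p] (P : Multiset (Multiset (Fin n))) :
    (P.map (fun B => B.countP p)).sum = P.sum.countP p := by
  induction P using Multiset.induction_on with
  | empty => simp
  | cons B P ih => simp [Multiset.countP_add, ih]

theorem sum_map_countP_singleton [DecidablePred p] (M : Multiset (Fin n)) :
    (M.map (fun i => ({i} : Multiset (Fin n)).countP p)).sum = M.countP p := by
  have := sum_map_countP (p := p) (M.map fun i => ({i} : Multiset (Fin n)))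
  rw [Multiset.map_map, Multiset.sum_map_singleton] at this
  exact this

/-- The partitions reachable from `onlyBlock A` are those with a block containing at least
`|A|` elements satisfying `p`. -/
theorem downClos_onlyBlock [DecidablePred p] (A : Finset (Fin n)) (hA : ∀ i ∈ A, p i)
    (hA0 : A.Nonempty)
    (hmod : ∀ x ∈ S, (plusM x).countP p ≡ (minusM x).countP p [MOD A.card])
    (hS : ∀ i j, p i → p j → i ≠ j → (Pi.single i 1 - Pi.single j 1 : Fin n → ℝ) ∈ S) :
    downClos S (onlyBlock A) = {ρ | IsPartitionM ρ ∧ ∃ B ∈ ρ, A.card ≤ B.countP p} := by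
  have hAp : A.val.countP p = A.card := Multiset.countP_eq_card.2 hA
  ext ρ
  refine and_congr_right fun hρ => ⟨fun h => ?_, ?_⟩
  · by_contra! hB
    have h1 := sum_countP_mod_le_of_reach A.card hmod h
    rw [Multiset.map_congr rfl fun B hB' => Nat.mod_eq_of_lt (hB B hB'), sum_map_countP,
      hρ.sum_eq, onlyBlock, Multiset.map_cons, Multiset.sum_cons, hAp, Nat.mod_self, zero_add,
      Multiset.map_map] at h1
    have hle : A.val ≤ Finset.univ.val := Finset.val_le_iff.2 A.subset_univ
    have h2 : ((Finset.univ \ A).val.map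
        ((fun B => B.countP p % A.card) ∘ fun i => ({i} : Multiset (Fin n)))).sum ≤
        Finset.univ.val.countP p - A.card := by
      refine (Multiset.sum_map_le_sum_map _ _ fun i _ => Nat.mod_le _ _).trans_eq ?_
      rw [sum_map_countP_singleton, Finset.sdiff_val, Multiset.countP_sub hle, hAp]
    have h3 := Multiset.countP_le_of_le p hle
    have h4 := hA0.card_pos
    omega
  · rintro ⟨B, hB, hcard⟩
    obtain ⟨P, rfl⟩ := Multiset.exists_cons_of_mem hB
    rw [Multiset.countP_eq_card_filter] at hcard
    obtain ⟨N, hN⟩ := Multiset.card_pos_iff_exists_mem.1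
      ((Multiset.card_powersetCard A.card _).symm ▸ Nat.choose_pos hcard)
    obtain ⟨hN, hNc⟩ := Multiset.mem_powersetCard.1 hN
    have hNp : ∀ i ∈ N, p i := fun i hi => Multiset.of_mem_filter (Multiset.mem_of_le hN hi)
    obtain ⟨C, rfl⟩ := Multiset.le_iff_exists_add.1 (hN.trans (Multiset.filter_le p B))
    have hsum : Finset.univ.val = N + (C + P.sum) := by
      rw [← hρ.sum_eq, Multiset.sum_cons, add_assoc]
    have hrel : Multiset.Rel (Exchangeable p) A.val N :=
      Multiset.rel_of_forall (fun i j hi hj => Or.inr ⟨hA i hi, hNp j hj⟩) hNc.symm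
    have hcompl : A.val + (Finset.univ \ A).val = N + (C + P.sum) := by
      rw [← hsum, Finset.sdiff_val]
      exact add_tsub_cancel_of_le (Finset.val_le_iff.2 A.subset_univ)
    have hrel' : Multiset.Rel (Exchangeable p) (Finset.univ \ A).val (C + P.sum) := by
      have hf := congrArg (Multiset.filter p) hcompl
      have hf' := congrArg (Multiset.filter fun i => ¬ p i) hcompl
      rw [Multiset.filter_add, Multiset.filter_add, Multiset.filter_eq_self.2 hA,
        Multiset.filter_eq_self.2 hNp] at hf
      rw [Multiset.filter_add, Multiset.filter_add,
        Multiset.filter_eq_nil.2 fun i hi => not_not.2 (hA i hi),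
        Multiset.filter_eq_nil.2 fun i hi => not_not.2 (hNp i hi), zero_add, zero_add] at hf'
      rw [← Multiset.filter_add_not p (Finset.univ \ A).val,
        ← Multiset.filter_add_not p (C + P.sum), hf']
      refine Multiset.Rel.add (Multiset.rel_of_forall (fun i j hi hj =>
        Or.inr ⟨Multiset.of_mem_filter hi, Multiset.of_mem_filter hj⟩) ?_)
        (Multiset.rel_refl_of_refl_on fun i _ => Or.inl rfl)
      have hc := congrArg Multiset.card hf
      rw [Multiset.card_add, Multiset.card_add, hNc] at hc
      exact Nat.add_left_cancel hc
    have h1 := reach_block_of_rel hS hrel 0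
      ((Finset.univ \ A).val.map (fun i => ({i} : Multiset (Fin n))))
    have h2 := reach_singletons_of_rel hS hrel' {N}
    have h3 := reach_absorb_singletons (S := S) N C (P.sum.map fun i => {i})
    have h4 := reach_of_singletons (S := S) P {N + C}
      fun B hB => hρ.1 B (Multiset.mem_cons_of_mem hB)
    rw [zero_add, zero_add] at h1
    rw [add_comm, Multiset.singleton_add, add_comm, Multiset.singleton_add,
      Multiset.map_add] at h2
    rw [add_comm _ {N + C}, Multiset.singleton_add, add_comm _ {N + C},
      Multiset.singleton_add] at h4
    exact h1.trans (h2.trans (h3.trans h4))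

end Reachability

section Cube

variable {n : ℕ} {S : Set (Fin n → ℝ)} {p : Fin n → Prop} [DecidablePred p]

theorem countP_plusM (x : Fin n → ℝ) :
    (plusM x).countP p = (Finset.univ.filter fun i => p i ∧ x i = 1).card := by
  rw [plusM, Multiset.countP_eq_card_filter, ← Finset.filter_val, Finset.filter_filter]
  simp only [and_comm, Finset.card_def]

theorem countP_minusM (x : Fin n → ℝ) :
    (minusM x).countP p = (Finset.univ.filter fun i => p i ∧ x i = -1).card := by
  rw [minusM, Multiset.countP_eq_card_filter, ← Finset.filter_val, Finset.filter_filter]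
  simp only [and_comm, Finset.card_def]

theorem IsCube.sum_ite {x : Fin n → ℝ} (hx : IsCube x) :
    (∑ i, if p i then x i else 0) = ((plusM x).countP p : ℝ) - (minusM x).countP p := by
  rw [countP_plusM, countP_minusM, Finset.natCast_card_filter, Finset.natCast_card_filter,
    ← Finset.sum_sub_distrib]
  refine Finset.sum_congr rfl fun i _ => ?_
  by_cases hp : p i <;> rcases hx i with h | h | h <;> simp [hp, h] <;> norm_num

theorem isCube_single_sub_single (i j : Fin n) :
    IsCube (Pi.single i 1 - Pi.single j 1 : Fin n → ℝ) := by
  intro t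
  simp only [Pi.sub_apply, Pi.single_apply]
  split_ifs <;> simp

/-- A nonzero cube vector orthogonal to a positive weight takes the value `1`. -/
theorem IsCube.exists_eq_one {w x : Fin n → ℝ} (hw : ∀ i, 0 < w i) (hx : IsCube x)
    (h0 : ∑ i, w i * x i = 0) (hne : x ≠ 0) : ∃ i, x i = 1 := by
  by_contra! h
  have hle : ∀ i, x i ≤ 0 := fun i => by
    rcases hx i with h' | h' | h'
    · rw [h']; norm_num
    · exact h'.le
    · exact absurd h' (h i)
  have hz := (Finset.sum_eq_zero_iff_of_nonpos fun i _ =>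
    mul_nonpos_of_nonneg_of_nonpos (hw i).le (hle i)).1 h0
  exact hne (funext fun i =>
    (mul_eq_zero.1 (hz i (Finset.mem_univ i))).resolve_left (hw i).ne')

theorem IsCube.exists_eq_neg_one {w x : Fin n → ℝ} (hw : ∀ i, 0 < w i) (hx : IsCube x)
    (h0 : ∑ i, w i * x i = 0) (hne : x ≠ 0) : ∃ i, x i = -1 := by
  have hx' : IsCube (-x) := fun i => by
    rcases hx i with h | h | h <;> simp [h]
  obtain ⟨i, hi⟩ := hx'.exists_eq_one hw (by simp [h0]) (neg_ne_zero.2 hne)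
  exact ⟨i, by rw [← hi]; simp⟩

theorem IsCube.sum_partOf {x : Fin n → ℝ} (hx : IsCube x) :
    (partOf x).sum = Finset.univ.val := by
  rw [partOf, Multiset.sum_cons, Multiset.sum_cons, Multiset.sum_map_singleton]
  ext i
  rw [Multiset.count_add, Multiset.count_add, plusM, minusM, Multiset.count_eq_of_nodup
    (Finset.nodup _), Multiset.count_eq_of_nodup (Finset.nodup _), Multiset.count_eq_of_nodup
    (Finset.nodup _), Multiset.count_eq_of_nodup (Finset.nodup _)]
  rcases hx i with h | h | h <;> simp [h] <;> norm_num

theorem IsCube.isPartitionM_partOf {w x : Fin n → ℝ} (hw : ∀ i, 0 < w i) (hx : IsCube x)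
    (h0 : ∑ i, w i * x i = 0) (hne : x ≠ 0) : IsPartitionM (partOf x) := by
  refine ⟨fun B hB => ?_, ?_, fun i => ?_⟩
  · rw [partOf, Multiset.mem_cons, Multiset.mem_cons, Multiset.mem_map] at hB
    rcases hB with rfl | rfl | ⟨i, -, rfl⟩
    · obtain ⟨i, hi⟩ := hx.exists_eq_one hw h0 hne
      exact fun h => Multiset.notMem_zero i (h ▸ by simp [plusM, hi])
    · obtain ⟨i, hi⟩ := hx.exists_eq_neg_one hw h0 hne
      exact fun h => Multiset.notMem_zero i (h ▸ by simp [minusM, hi])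
    · exact Multiset.singleton_ne_zero i
  · rw [hx.sum_partOf]; exact Finset.nodup _
  · rw [hx.sum_partOf]; exact Finset.mem_univ i

/-- Membership in the relative cut obtained by removing the partitions that have a block with
at least `d` elements satisfying `p`. -/
theorem mem_cutMinus_iff {w x : Fin n → ℝ} (hw : ∀ i, 0 < w i) {d : ℕ} (hd : 2 ≤ d)
    (hS : ∀ y ∈ S, IsCube y ∧ ∑ i, w i * y i = 0) :
    x ∈ cutMinus S {ρ | IsPartitionM ρ ∧ ∃ B ∈ ρ, d ≤ B.countP p} ↔
      x ∈ S ∧ (plusM x).countP p < d ∧ (minusM x).countP p < d := by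
  refine and_congr_right fun hx => ?_
  obtain ⟨hc, h0⟩ := hS x hx
  have hsingle (i : Fin n) : ¬ d ≤ ({i} : Multiset (Fin n)).countP p := by
    have := Multiset.countP_le_card p {i}
    rw [Multiset.card_singleton] at this
    omega
  have hblock : (∃ B ∈ partOf x, d ≤ B.countP p) ↔
      d ≤ (plusM x).countP p ∨ d ≤ (minusM x).countP p := by
    simp [partOf, hsingle]
  rw [Set.mem_ofPred_eq, hblock, ← not_le, ← not_le, ← not_or, not_iff_not, and_iff_right_iff_imp]
  intro h
  refine hc.isPartitionM_partOf hw h0 ?_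
  rintro rfl
  simp only [countP_plusM, countP_minusM] at h
  simp at h
  omega

end Cube

section Restrict

variable {n k : ℕ}

/-- The partial identification of the first `k` indices of `Fin n` with `Fin k`. -/
def firstIndex (k : ℕ) (i : Fin n) : Option (Fin k) :=
  if h : (i : ℕ) < k then some ⟨(i : ℕ), h⟩ else none

theorem card_filterMap_firstIndex (B : Multiset (Fin n)) :
    (B.filterMap (firstIndex k)).card = B.countP fun i : Fin _ => (i : ℕ) < k := by
  induction B using Multiset.induction_on with
  | empty => simp
  | cons i B ih =>
    by_cases h : (i : ℕ) < k
    · rw [Multiset.filterMap_cons_some _ _ _ (dif_pos h), Multiset.card_cons,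
        Multiset.countP_cons, if_pos h, ih]
    · rw [Multiset.filterMap_cons_none _ _ (dif_neg h), Multiset.countP_cons, if_neg h, ih,
        add_zero]

theorem restrictFirst_eq (ρ : Multiset (Multiset (Fin n))) :
    restrictFirst k ρ = (ρ.map fun B => B.filterMap (firstIndex k)).filter fun B => B ≠ 0 := by
  have h (B : Multiset (Fin n)) : (do let i ← B; pure (i : ℕ)) = B.map Fin.val := by simp
  simp only [restrictFirst, h, Multiset.filterMap_map]
  rfl

theorem sum_restrictFirst (ρ : Multiset (Multiset (Fin n))) :
    (restrictFirst k ρ).sum = ρ.sum.filterMap (firstIndex k) := by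
  rw [restrictFirst_eq]
  induction ρ using Multiset.induction_on with
  | empty => simp
  | cons B ρ ih =>
    rw [Multiset.map_cons, Multiset.sum_cons, Multiset.filterMap_add, ← ih]
    by_cases h : B.filterMap (firstIndex k) = 0
    · rw [Multiset.filter_cons_of_neg _ (by simpa using h), h, zero_add]
    · rw [Multiset.filter_cons_of_pos (p := fun B => B ≠ 0) _ h, Multiset.sum_cons]

theorem IsPartitionM.restrictFirst (hkn : k ≤ n) {ρ : Multiset (Multiset (Fin n))}
    (hρ : IsPartitionM ρ) : IsPartitionM (restrictFirst k ρ) := by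
  refine ⟨fun B hB => (Multiset.mem_filter.1 hB).2, ?_, fun i => ?_⟩
  · rw [sum_restrictFirst]
    refine hρ.2.1.filterMap _ fun i j t hi hj => ?_
    simp only [firstIndex, Option.mem_def, Option.dite_none_right_eq_some,
      Option.some.injEq] at hi hj
    obtain ⟨_, rfl⟩ := hi
    obtain ⟨_, h⟩ := hj
    exact Fin.ext (Fin.ext_iff.1 h).symm
  · rw [sum_restrictFirst, Multiset.mem_filterMap]
    exact ⟨Fin.castLE hkn i, hρ.2.2 _, dif_pos i.2⟩

theorem exists_mem_restrictFirst {d : ℕ} (hd : 0 < d) (ρ : Multiset (Multiset (Fin n))) :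
    (∃ B ∈ restrictFirst k ρ, d ≤ B.countP fun i : Fin _ => (i : ℕ) < k) ↔
      ∃ B ∈ ρ, d ≤ B.countP fun i : Fin _ => (i : ℕ) < k := by
  have hcard (B : Multiset (Fin k)) : B.countP (fun i : Fin _ => (i : ℕ) < k) = B.card :=
    Multiset.countP_eq_card.2 fun i _ => i.2
  simp only [hcard, restrictFirst_eq, Multiset.mem_filter, Multiset.mem_map]
  constructor
  · rintro ⟨_, ⟨⟨B, hB, rfl⟩, -⟩, h⟩
    exact ⟨B, hB, h.trans_eq (card_filterMap_firstIndex B)⟩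
  · rintro ⟨B, hB, h⟩
    rw [← card_filterMap_firstIndex] at h
    exact ⟨_, ⟨⟨B, hB, rfl⟩, Multiset.card_pos.1 (hd.trans_le h)⟩, h⟩

end Restrict

section Resonance

theorem card_filter_lt {d n : ℕ} (h : d ≤ n) :
    (Finset.univ.filter fun i : Fin n => (i : ℕ) < d).card = d := by
  rw [Fin.card_filter_val_lt, min_eq_right h]

theorem downClos_firstBlock {n k d : ℕ} {S : Set (Fin n → ℝ)} (hd : 0 < d) (hdk : d ≤ k)
    (hkn : k ≤ n)
    (hmod : ∀ x ∈ S, (plusM x).countP (fun i : Fin _ => (i : ℕ) < k) ≡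
      (minusM x).countP (fun i : Fin _ => (i : ℕ) < k) [MOD d])
    (hS : ∀ i j : Fin n, (i : ℕ) < k → (j : ℕ) < k → i ≠ j →
      (Pi.single i 1 - Pi.single j 1 : Fin n → ℝ) ∈ S) :
    downClos S (firstBlock d n) =
      {ρ | IsPartitionM ρ ∧ ∃ B ∈ ρ, d ≤ B.countP fun i : Fin _ => (i : ℕ) < k} := by
  have hcard := card_filter_lt (hdk.trans hkn)
  have := downClos_onlyBlock (S := S) (p := fun i : Fin _ => (i : ℕ) < k)
    (Finset.univ.filter fun i : Fin n => (i : ℕ) < d)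
    (fun i hi => (Finset.mem_filter.1 hi).2.trans_le hdk)
    (Finset.card_pos.1 (hcard.symm ▸ hd)) (hcard.symm ▸ hmod) hS
  rwa [hcard] at this

theorem sum_TOnes_eq {k : ℕ} {z : Fin k → ℝ} (hz : IsCube z) :
    ∑ i, z i = ((plusM z).countP (fun i : Fin _ => (i : ℕ) < k) : ℝ) -
      (minusM z).countP (fun i : Fin _ => (i : ℕ) < k) := by
  rw [← hz.sum_ite]
  simp

theorem countP_eq_of_mem_TOnes {k : ℕ} {z : Fin k → ℝ} (hz : z ∈ TOnes k) :
    (plusM z).countP (fun i : Fin _ => (i : ℕ) < k) =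
      (minusM z).countP (fun i : Fin _ => (i : ℕ) < k) := by
  have h := sum_TOnes_eq hz.1
  rw [hz.2] at h
  exact_mod_cast (sub_eq_zero.1 h.symm)

theorem downClos_TOnes {k d : ℕ} (hd : 0 < d) (hdk : d ≤ k) :
    downClos (TOnes k) (firstBlock d k) =
      {ρ | IsPartitionM ρ ∧ ∃ B ∈ ρ, d ≤ B.countP fun i : Fin _ => (i : ℕ) < k} := by
  refine downClos_firstBlock hd hdk le_rfl (fun x hx => ?_) fun i j _ _ _ => ?_
  · rw [countP_eq_of_mem_TOnes hx]
  · exact ⟨isCube_single_sub_single i j, by simp⟩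

theorem cutMinus_TOnes {k d : ℕ} (hd : 2 ≤ d) (hdk : d ≤ k) :
    cutMinus (TOnes k) (downClos (TOnes k) (firstBlock d k)) =
      {z | z ∈ TOnes k ∧ (Finset.univ.filter fun i : Fin k => z i = 1).card < d} := by
  ext z
  rw [downClos_TOnes (by omega) hdk, mem_cutMinus_iff (w := fun _ => 1) (by simp) hd
    (fun y hy => ⟨hy.1, by simpa using hy.2⟩)]
  refine and_congr_right fun hz => ?_
  rw [← countP_eq_of_mem_TOnes hz, and_self, countP_plusM]
  simp

variable {a b g abar bbar k l m : ℕ}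

/-- The weight defining `SGAB`, split into the part of the first `k` coordinates and the rest. -/
theorem sum_SGAB_eq (x : Fin (k + l + m) → ℝ) :
    ∑ i : Fin (k + l + m),
      (if (i : ℕ) < k then (a : ℝ) else if (i : ℕ) < k + l then (b : ℝ) else (g : ℝ)) * x i =
    a * (∑ i : Fin (k + l + m), if (i : ℕ) < k then x i else 0) +
    ∑ i : Fin (k + l + m),
      (if (i : ℕ) < k then 0 else if (i : ℕ) < k + l then (b : ℝ) else (g : ℝ)) * x i := by
  rw [Finset.mul_sum, ← Finset.sum_add_distrib]
  refine Finset.sum_congr rfl fun i _ => ?_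
  split_ifs <;> ring

/-- The part of the weight outside the first `k` coordinates is `b` times an integer. -/
theorem IsCube.exists_sum_tail_eq (hbbar : b * bbar = g) {x : Fin (k + l + m) → ℝ}
    (hx : IsCube x) :
    ∃ c : ℤ, ∑ i : Fin (k + l + m),
      (if (i : ℕ) < k then 0 else if (i : ℕ) < k + l then (b : ℝ) else (g : ℝ)) * x i =
      b * c := by
  have hint : ∀ i, ∃ e : ℤ, x i = e := fun i => by
    rcases hx i with h | h | h
    exacts [⟨-1, by simp [h]⟩, ⟨0, by simp [h]⟩, ⟨1, by simp [h]⟩]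
  choose e he using hint
  refine ⟨∑ i : Fin (k + l + m),
    (if (i : ℕ) < k then 0 else if (i : ℕ) < k + l then 1 else (bbar : ℤ)) * e i, ?_⟩
  rw [Int.cast_sum, Finset.mul_sum]
  refine Finset.sum_congr rfl fun i _ => ?_
  rw [he i, ← hbbar]
  split_ifs <;> push_cast <;> ring

theorem dvd_of_mem_SGAB (ha : 0 < a) (hg : g = Nat.lcm a b) (habar : a * abar = g)
    (hbbar : b * bbar = g) {x : Fin (k + l + m) → ℝ} (hx : x ∈ SGAB a b g k l m) :
    (abar : ℤ) ∣ (plusM x).countP (fun i : Fin _ => (i : ℕ) < k) -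
      (minusM x).countP (fun i : Fin _ => (i : ℕ) < k) := by
  obtain ⟨hc, h0⟩ := hx
  obtain ⟨c, hcs⟩ := hc.exists_sum_tail_eq hbbar
  rw [sum_SGAB_eq, hcs, hc.sum_ite] at h0
  set D : ℤ := (plusM x).countP (fun i : Fin _ => (i : ℕ) < k) -
      (minusM x).countP (fun i : Fin _ => (i : ℕ) < k) with hD
  have h1 : (a : ℤ) * D + b * c = 0 := by
    rw [hD]; exact_mod_cast h0
  have hb : (b : ℤ) ∣ a * D := ⟨-c, by linarith⟩
  have hl : ((Nat.lcm a b : ℕ) : ℤ) ∣ a * D := by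
    rw [← Int.natAbs_dvd_natAbs] at hb ⊢
    exact Nat.lcm_dvd (Int.natAbs_dvd_natAbs.2 (Dvd.intro D rfl)) hb
  rw [← hg, ← habar, Nat.cast_mul] at hl
  exact Int.dvd_of_mul_dvd_mul_left (by omega) hl

theorem downClos_SGAB (ha : 0 < a) (hg : g = Nat.lcm a b) (habar : a * abar = g)
    (hbbar : b * bbar = g) (hd : 0 < abar) (hk : abar ≤ k) :
    downClos (SGAB a b g k l m) (firstBlock abar (k + l + m)) =
      {ρ | IsPartitionM ρ ∧ ∃ B ∈ ρ, abar ≤ B.countP fun i : Fin _ => (i : ℕ) < k} := by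
  refine downClos_firstBlock hd hk (by omega) (fun x hx => ?_) fun i j hi hj _ => ?_
  · exact ((Int.natCast_modEq_iff).1
      (Int.modEq_iff_dvd.2 (dvd_of_mem_SGAB ha hg habar hbbar hx))).symm
  · refine ⟨isCube_single_sub_single i j, ?_⟩
    simp [mul_sub, Finset.sum_sub_distrib, Pi.single_apply, hi, hj]

theorem cutMinus_SGAB (ha : 2 ≤ a) (hab : a < b) (hg : g = Nat.lcm a b)
    (habar : a * abar = g) (hbbar : b * bbar = g) (hd : 2 ≤ abar) (hk : abar ≤ k) :
    cutMinus (SGAB a b g k l m)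
        (downClos (SGAB a b g k l m) (firstBlock abar (k + l + m))) =
      {x | IsCube x ∧ (∑ i : Fin (k + l + m), if (i : ℕ) < k then x i else 0) = 0 ∧
        (Finset.univ.filter (fun i : Fin (k + l + m) => (i : ℕ) < k ∧ x i = 1)).card < abar ∧
        (∑ i : Fin (k + l + m),
          (if (i : ℕ) < k then 0 else if (i : ℕ) < k + l then (b : ℝ) else (g : ℝ)) * x i)
          = 0} := by
  have hgpos : 0 < g := habar ▸ Nat.mul_pos (by omega) (by omega)
  ext x
  rw [downClos_SGAB (by omega) hg habar hbbar (by omega) hk,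
    mem_cutMinus_iff (S := SGAB a b g k l m) (w := fun i => if (i : ℕ) < k then (a : ℝ)
      else if (i : ℕ) < k + l then (b : ℝ) else (g : ℝ))
      (fun i => by
        split_ifs
        exacts [Nat.cast_pos.2 (by omega), Nat.cast_pos.2 (by omega), Nat.cast_pos.2 hgpos])
      hd (fun y hy => hy), Set.mem_ofPred_eq, ← countP_plusM]
  constructor
  · rintro ⟨hx, hp, hm⟩
    have hdvd := dvd_of_mem_SGAB (by omega) hg habar hbbar hx
    have hzero := Int.eq_zero_of_abs_lt_dvd hdvd (by rw [abs_lt]; omega)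
    have hsum : (∑ i : Fin (k + l + m), if (i : ℕ) < k then x i else 0) = 0 := by
      rw [hx.1.sum_ite]; exact_mod_cast hzero
    have h0 := hx.2
    rw [sum_SGAB_eq, hsum, mul_zero, zero_add] at h0
    exact ⟨hx.1, hsum, hp, h0⟩
  · rintro ⟨hc, hsum, hp, h0⟩
    refine ⟨⟨hc, by rw [sum_SGAB_eq, hsum, h0, mul_zero, zero_add]⟩, hp, ?_⟩
    rw [hc.sum_ite, sub_eq_zero, Nat.cast_inj] at hsum
    rwa [← hsum]

theorem two_le_of_mul_eq_lcm (ha : 0 < a) (hab : a < b) (h : a * abar = Nat.lcm a b) :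
    2 ≤ abar := by
  have hle : b ≤ a * abar :=
    h ▸ Nat.le_of_dvd (Nat.lcm_pos ha (ha.trans hab)) (Nat.dvd_lcm_right a b)
  by_contra! hlt
  have : a * abar ≤ a * 1 := Nat.mul_le_mul_left a (by omega)
  omega

/-- Sums over `Fin (k + l + m)` split into the first `k` and the last `l + m` indices. -/
theorem sum_fin_split (f : Fin (k + l + m) → ℝ) :
    ∑ i, f i = (∑ i : Fin k, f (Fin.castLE (by omega) i)) +
      ∑ j : Fin (l + m), f ⟨k + (j : ℕ), by have := j.isLt; omega⟩ := by
  rw [← (finCongr (add_assoc k l m).symm).sum_comp f, Fin.sum_univ_add]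
  rfl

end Resonance

/-- the structure of the relative cut `Q(S, π↓S)` for the resonance
`(g^m, a^k, b^l)`, `g = lcm(a,b)`, where `π` has unique non-singleton block `{1,…,ā}`. -/
theorem relative_cut_g_a_b (a b g abar bbar k l m : ℕ)
    (ha : 2 ≤ a) (hab : a < b) (hg : g = Nat.lcm a b)
    (habar : a * abar = g) (hbbar : b * bbar = g)
    (hk : abar ≤ k) (hl : 1 ≤ l) :
    -- (i)
    downClos (SGAB a b g k l m) (firstBlock abar (k + l + m)) =
      {ρ | IsPartitionM ρ ∧
        restrictFirst k ρ ∈ downClos (TOnes k) (firstBlock abar k)} ∧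
    -- (ii)
    cutMinus (SGAB a b g k l m)
        (downClos (SGAB a b g k l m) (firstBlock abar (k + l + m))) =
      {x | IsCube x ∧ (∑ i : Fin (k + l + m), if (i : ℕ) < k then x i else 0) = 0 ∧
        (Finset.univ.filter (fun i : Fin (k + l + m) => (i : ℕ) < k ∧ x i = 1)).card < abar ∧
        (∑ i : Fin (k + l + m),
          (if (i : ℕ) < k then 0 else if (i : ℕ) < k + l then (b : ℝ) else (g : ℝ)) * x i)
          = 0} ∧
    -- (iii)
    cutMinus (TOnes k) (downClos (TOnes k) (firstBlock abar k)) =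
      {z | z ∈ TOnes k ∧ (Finset.univ.filter (fun i : Fin k => z i = 1)).card < abar} ∧
    cutMinus (SGAB a b g k l m)
        (downClos (SGAB a b g k l m) (firstBlock abar (k + l + m))) =
      {x | IsCube x ∧
        (fun i : Fin k => x (Fin.castLE (by omega) i)) ∈
          cutMinus (TOnes k) (downClos (TOnes k) (firstBlock abar k)) ∧
        (fun j : Fin (l + m) => x ⟨k + (j : ℕ), by have := j.isLt; omega⟩) ∈
          UBbar bbar l m} := by
  have hd : 2 ≤ abar := two_le_of_mul_eq_lcm (by omega) hab (habar.trans hg)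
  have hb : (b : ℝ) ≠ 0 := Nat.cast_ne_zero.2 (by omega)
  have hii := cutMinus_SGAB (l := l) (m := m) ha hab hg habar hbbar hd hk
  refine ⟨?_, hii, cutMinus_TOnes hd hk, ?_⟩
  · rw [downClos_SGAB (by omega) hg habar hbbar (by omega) hk, downClos_TOnes (by omega) hk]
    ext ρ
    refine and_congr_right fun hρ => ?_
    rw [Set.mem_ofPred_eq, exists_mem_restrictFirst (by omega),
      and_iff_right (hρ.restrictFirst (by omega))]
  · rw [hii, cutMinus_TOnes hd hk]
    ext x
    refine and_congr_right fun hx => ?_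
    have hfirst : (∑ i : Fin (k + l + m), if (i : ℕ) < k then x i else 0) =
        ∑ i : Fin k, x (Fin.castLE (by omega) i) := by
      rw [sum_fin_split]
      simp
    have hcount : (Finset.univ.filter
        (fun i : Fin (k + l + m) => (i : ℕ) < k ∧ x i = 1)).card =
        (Finset.univ.filter (fun i : Fin k => x (Fin.castLE (by omega) i) = 1)).card := by
      rw [← Nat.cast_inj (R := ℝ), Finset.natCast_card_filter, Finset.natCast_card_filter,
        sum_fin_split]
      simp
    have hlast : (∑ i : Fin (k + l + m),
        (if (i : ℕ) < k then 0 else if (i : ℕ) < k + l then (b : ℝ) else (g : ℝ)) * x i) =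
        b * ∑ j : Fin (l + m), (if (j : ℕ) < l then 1 else (bbar : ℝ)) *
          x ⟨k + (j : ℕ), by have := j.isLt; omega⟩ := by
      rw [sum_fin_split, ← hbbar, Finset.mul_sum]
      simp [mul_assoc]
    rw [hfirst, hcount, hlast, mul_eq_zero, or_iff_right hb]
    exact ⟨fun ⟨h1, h2, h3⟩ => ⟨⟨⟨fun i => hx _, h1⟩, h2⟩, fun j => hx _, h3⟩,
      fun ⟨⟨⟨_, h1⟩, h2⟩, _, h3⟩ => ⟨h1, h2, h3⟩⟩
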